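/- Euclid's Proposition I.7 (in the real Euclidean plane): Let A, B, C, D be points in ℝ × ℝ with A ≠ B. Suppose C and D lie strictly on the same side of the line through A and B, i.e., the cross products ((B.1 − A.1) * (C.2 − A.2) − (B.2 − A.2) * (C.1 − A.1)) and ((B.1 − A.1) * (D.2 − A.2) − (B.2 − A.2) * (D.1 − A.1)) are both positive. If dist A C = dist A D and dist B C = dist B D, then C = D. (Two segments from A and B equal respectively to AC and BC cannot meet at a second point on the same side of AB.) -/

import Mathlib

/-!
Put `u = B - A`, `c = C - A`, `d = D - A`. The two distance equalities give `|c|² = |d|²` and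
`u · c = u · d`. By Lagrange's identity `(u × c)² = |u|² |c|² - (u · c)²`, so the cross products
have equal squares; being both positive, they agree. Since `u ≠ 0`, a vector of the plane is
determined by its dot and cross products with `u`, hence `c = d`.
-/

/-- Euclidean distance on the plane ℝ × ℝ. -/
noncomputable def euclidDist (P Q : ℝ × ℝ) : ℝ :=
  Real.sqrt ((P.1 - Q.1) ^ 2 + (P.2 - Q.2) ^ 2)

/-- Euclid I.7: two segments from A and B equal respectively to AC and BC cannot
meet at a second point on the same side of the line AB. -/
theorem euclid_I_7 (A B C D : ℝ × ℝ) (hAB : A ≠ B)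
    (hC : 0 < (B.1 - A.1) * (C.2 - A.2) - (B.2 - A.2) * (C.1 - A.1))
    (hD : 0 < (B.1 - A.1) * (D.2 - A.2) - (B.2 - A.2) * (D.1 - A.1))
    (hAC : euclidDist A C = euclidDist A D)
    (hBC : euclidDist B C = euclidDist B D) :
    C = D := by
  obtain ⟨a, a'⟩ := A
  obtain ⟨b, b'⟩ := B
  obtain ⟨c, c'⟩ := C
  obtain ⟨d, d'⟩ := D
  simp only [euclidDist] at hC hD hAC hBC
  rw [Real.sqrt_inj (by positivity) (by positivity)] at hAC hBC
  have hdot : (b - a) * (c - a) + (b' - a') * (c' - a')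
      = (b - a) * (d - a) + (b' - a') * (d' - a') := by
    linear_combination (hAC - hBC) / 2
  have hcross : (b - a) * (c' - a') - (b' - a') * (c - a)
      = (b - a) * (d' - a') - (b' - a') * (d - a) := by
    rw [← sq_eq_sq₀ hC.le hD.le]
    -- Lagrange's identity for `c` and `d`, subtracted.
    linear_combination ((b - a) ^ 2 + (b' - a') ^ 2) * hAC
      - ((b - a) * (c - a) + (b' - a') * (c' - a')
        + ((b - a) * (d - a) + (b' - a') * (d' - a'))) * hdot
  have hu : (b - a) ^ 2 + (b' - a') ^ 2 ≠ 0 := by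
    intro h
    apply hAB
    ext <;> dsimp only <;> nlinarith [sq_nonneg (b - a), sq_nonneg (b' - a')]
  ext
  · apply mul_left_cancel₀ hu
    linear_combination (b - a) * hdot - (b' - a') * hcross
  · apply mul_left_cancel₀ hu
    linear_combination (b' - a') * hdot + (b - a) * hcross
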